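/- For arbitrary real d×d matrices M_1,…,M_n and an arbitrary real n×n matrix Q: ‖ Σ_{x=1}^{n} Σ_{y=1}^{n} Q(x,y)·M_x·M_yᵀ ‖_2 ≤ ‖Q‖_2 · ‖ Σ_{x=1}^{n} M_x·M_xᵀ ‖_2. -/

import Mathlib

/-!
Place the matrices `M x` side by side in one `d × (n d)` block row `B`. Then
`∑ x, M x * (M x)ᵀ = B * Bᵀ` and `∑ x y, Q x y • (M x * (M y)ᵀ) = B * (Q ⊗ 1) * Bᵀ`.
The claim follows from submultiplicativity of the operator norm, the C⋆-identity
`‖B‖ * ‖B‖ = ‖B * Bᵀ‖`, and `‖Q ⊗ 1‖ ≤ ‖Q‖`. Here `Q ⊗ 1` is realised as the block diagonal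
matrix with `d` copies of `Q`. The lemma `specNorm_eq_norm` identifies `specNorm` with Mathlib's
`ℓ₂` operator norm on matrices.
-/

set_option autoImplicit false

open Matrix

/-- Euclidean (ℓ₂) norm of a finite real vector. -/
noncomputable def euclNorm {ι : Type*} [Fintype ι] (v : ι → ℝ) : ℝ :=
  Real.sqrt (∑ i, v i ^ 2)

/-- Spectral (ℓ₂ operator) norm of a real matrix: the supremum of `‖M v‖₂` over
unit vectors `v`. -/
noncomputable def specNorm {ι κ : Type*} [Fintype ι] [Fintype κ] (M : Matrix ι κ ℝ) : ℝ :=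
  sSup {r : ℝ | ∃ v : κ → ℝ, euclNorm v = 1 ∧ r = euclNorm (M.mulVec v)}

open scoped Matrix.Norms.L2Operator

lemma euclNorm_nonneg {ι : Type*} [Fintype ι] (v : ι → ℝ) : 0 ≤ euclNorm v := Real.sqrt_nonneg _

lemma euclNorm_eq_norm {ι : Type*} [Fintype ι] (v : ι → ℝ) :
    euclNorm v = ‖WithLp.toLp 2 v‖ := by
  simp [euclNorm, EuclideanSpace.norm_eq]

lemma euclNorm_mulVec_le {ι κ : Type*} [Fintype ι] [Fintype κ] [DecidableEq κ]
    (M : Matrix ι κ ℝ) (v : κ → ℝ) : euclNorm (M *ᵥ v) ≤ ‖M‖ * euclNorm v := by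
  rw [euclNorm_eq_norm, euclNorm_eq_norm]
  exact Matrix.l2_opNorm_mulVec M (WithLp.toLp 2 v)

lemma euclNorm_smul {ι : Type*} [Fintype ι] (c : ℝ) (v : ι → ℝ) :
    euclNorm (c • v) = |c| * euclNorm v := by
  simp [euclNorm_eq_norm, norm_smul]

lemma norm_le_of_euclNorm_mulVec_le {ι κ : Type*} [Fintype ι] [Fintype κ] [DecidableEq κ]
    (M : Matrix ι κ ℝ) {C : ℝ} (hC : 0 ≤ C)
    (h : ∀ v, euclNorm (M *ᵥ v) ≤ C * euclNorm v) : ‖M‖ ≤ C := by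
  rw [Matrix.l2_opNorm_def]
  refine ContinuousLinearMap.opNorm_le_bound _ hC fun v => ?_
  have := h v.ofLp
  rw [euclNorm_eq_norm, euclNorm_eq_norm] at this
  exact this

/-- This also holds when `κ` is empty: there are no unit vectors, and `sSup ∅ = 0` agrees with the
norm of the zero operator. -/
lemma specNorm_eq_norm {ι κ : Type*} [Fintype ι] [Fintype κ] [DecidableEq κ]
    (M : Matrix ι κ ℝ) : specNorm M = ‖M‖ := by
  have hub : ∀ r ∈ {r : ℝ | ∃ v : κ → ℝ, euclNorm v = 1 ∧ r = euclNorm (M.mulVec v)},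
      r ≤ ‖M‖ := by
    rintro r ⟨v, hv, rfl⟩
    simpa [hv] using euclNorm_mulVec_le M v
  have hnn : 0 ≤ specNorm M := by
    apply Real.sSup_nonneg
    rintro r ⟨v, -, rfl⟩
    exact euclNorm_nonneg _
  apply le_antisymm
  · exact Real.sSup_le hub (norm_nonneg M)
  · refine norm_le_of_euclNorm_mulVec_le M hnn fun v => ?_
    by_cases hv : euclNorm v = 0
    · simpa [hv] using euclNorm_mulVec_le M v
    have hpos : 0 < euclNorm v := lt_of_le_of_ne (euclNorm_nonneg _) (Ne.symm hv)
    have hunit : euclNorm ((euclNorm v)⁻¹ • v) = 1 := by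
      rw [euclNorm_smul, abs_of_pos (inv_pos.mpr hpos), inv_mul_cancel₀ hv]
    have key : euclNorm (M *ᵥ ((euclNorm v)⁻¹ • v)) ≤ specNorm M :=
      le_csSup ⟨‖M‖, hub⟩ ⟨_, hunit, rfl⟩
    rw [Matrix.mulVec_smul, euclNorm_smul, abs_of_pos (inv_pos.mpr hpos),
      inv_mul_le_iff₀ hpos] at key
    linarith

lemma euclNorm_sq {ι : Type*} [Fintype ι] (v : ι → ℝ) : euclNorm v ^ 2 = ∑ i, v i ^ 2 :=
  Real.sq_sqrt (Finset.sum_nonneg fun _ _ => sq_nonneg _)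

/-- A block diagonal matrix acts separately on each block of coordinates, so the squared norms
of the blocks of the image add up. -/
lemma norm_blockDiagonal_const_le {ι κ : Type*} [Fintype ι] [Fintype κ] [DecidableEq ι]
    [DecidableEq κ] (Q : Matrix ι ι ℝ) : ‖blockDiagonal fun _ : κ => Q‖ ≤ ‖Q‖ := by
  refine norm_le_of_euclNorm_mulVec_le _ (norm_nonneg Q) fun v => ?_
  refine (sq_le_sq₀ (euclNorm_nonneg _) (mul_nonneg (norm_nonneg Q) (euclNorm_nonneg _))).mp ?_
  have hblock : ∀ x k, ((blockDiagonal fun _ : κ => Q) *ᵥ v) (x, k)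
      = (Q *ᵥ fun y => v (y, k)) x := by
    intro x k
    simp [Matrix.mulVec, dotProduct, Fintype.sum_prod_type, blockDiagonal_apply, ite_mul]
  rw [mul_pow, euclNorm_sq, euclNorm_sq, Fintype.sum_prod_type_right,
    Fintype.sum_prod_type_right, Finset.mul_sum]
  refine Finset.sum_le_sum fun k _ => ?_
  have h := pow_le_pow_left₀ (euclNorm_nonneg _) (euclNorm_mulVec_le Q fun y => v (y, k)) 2
  rw [mul_pow] at h
  rw [euclNorm_sq, euclNorm_sq] at h
  simpa only [hblock] using h

/-- The block row `[M₁ ⋯ Mₙ]`, whose columns are indexed by a block and a column of that block. -/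
def blockRow {d n : ℕ} (M : Fin n → Matrix (Fin d) (Fin d) ℝ) :
    Matrix (Fin d) (Fin n × Fin d) ℝ :=
  Matrix.of fun i p => M p.1 i p.2

lemma blockRow_mul_transpose {d n : ℕ} (M : Fin n → Matrix (Fin d) (Fin d) ℝ) :
    blockRow M * (blockRow M)ᵀ = ∑ x, M x * (M x)ᵀ := by
  ext i j
  simp [blockRow, Matrix.mul_apply, Matrix.sum_apply, Fintype.sum_prod_type]

lemma blockRow_mul_blockDiagonal_mul_transpose {d n : ℕ}
    (M : Fin n → Matrix (Fin d) (Fin d) ℝ) (Q : Matrix (Fin n) (Fin n) ℝ) :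
    blockRow M * ((blockDiagonal fun _ : Fin d => Q) * (blockRow M)ᵀ)
      = ∑ x, ∑ y, Q x y • (M x * (M y)ᵀ) := by
  ext i j
  simp only [blockRow, Matrix.mul_apply, Matrix.sum_apply, Fintype.sum_prod_type,
    Matrix.smul_apply, Matrix.transpose_apply, Matrix.of_apply, blockDiagonal_apply, ite_mul,
    zero_mul, Finset.sum_ite_eq, Finset.mem_univ, if_true, Finset.mul_sum, smul_eq_mul]
  refine Finset.sum_congr rfl fun x _ => ?_
  rw [Finset.sum_comm]
  refine Finset.sum_congr rfl fun y _ => Finset.sum_congr rfl fun k _ => ?_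
  ring

/-- For arbitrary real `d × d` matrices `M_1, …, M_n` and an arbitrary real
`n × n` matrix `Q`, `‖ Σ_{x,y} Q(x,y) M_x M_yᵀ ‖₂ ≤ ‖Q‖₂ · ‖ Σ_x M_x M_xᵀ ‖₂`. -/
theorem specNorm_weighted_outer_sum_le {d n : ℕ}
    (M : Fin n → Matrix (Fin d) (Fin d) ℝ) (Q : Matrix (Fin n) (Fin n) ℝ) :
    specNorm (∑ x, ∑ y, Q x y • (M x * (M y)ᵀ))
      ≤ specNorm Q * specNorm (∑ x, M x * (M x)ᵀ) := by
  rw [specNorm_eq_norm, specNorm_eq_norm, specNorm_eq_norm,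
    ← blockRow_mul_blockDiagonal_mul_transpose, ← blockRow_mul_transpose]
  set B := blockRow M
  set K := blockDiagonal fun _ : Fin d => Q
  have hT : ‖Bᵀ‖ = ‖B‖ := by
    simpa [conjTranspose_eq_transpose_of_trivial] using Matrix.l2_opNorm_conjTranspose B
  have hB : ‖B * Bᵀ‖ = ‖B‖ * ‖B‖ := by
    simpa [conjTranspose_eq_transpose_of_trivial, hT] using
      Matrix.l2_opNorm_conjTranspose_mul_self Bᵀ
  have hK : ‖K‖ ≤ ‖Q‖ := norm_blockDiagonal_const_le Q
  calc ‖B * (K * Bᵀ)‖ ≤ ‖B‖ * (‖K‖ * ‖Bᵀ‖) :=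
        (Matrix.l2_opNorm_mul _ _).trans
          (mul_le_mul_of_nonneg_left (Matrix.l2_opNorm_mul _ _) (norm_nonneg B))
    _ = ‖K‖ * (‖B‖ * ‖B‖) := by rw [hT]; ring
    _ ≤ ‖Q‖ * ‖B * Bᵀ‖ := by rw [hB]; gcongr
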